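/- Let k > 0 and take μ = 1/2. Then the PGN(1/2, k) distribution has, for Lebesgue-almost every x ∈ ℝ, the density f_X(x) = ((x²)^{(k−1)/2} · e^{−x²/2} / (√π · Γ(k/2) · 2^{k/2})) · U(1/2, (k+1)/2, x²/2), where U(a,b,z) = (1/Γ(a)) ∫_0^∞ e^{−zt} t^{a−1} (1+t)^{b−a−1} dt is Tricomi's confluent hypergeometric function (given here by its integral representation, valid for z > 0). -/

import Mathlib

open MeasureTheory Real Set

/-- Density of the chi-squared distribution with `k` degrees of freedom. -/
noncomputable def chiSqDensity (k : ℝ) (v : ℝ) : ℝ :=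
  if 0 < v then v ^ (k / 2 - 1) * Real.exp (-v / 2) / ((2 : ℝ) ^ (k / 2) * Real.Gamma (k / 2))
  else 0

/-- The Beta function `B(a,b) = Γ(a)Γ(b)/Γ(a+b)`. -/
noncomputable def realBeta (a b : ℝ) : ℝ := Real.Gamma a * Real.Gamma b / Real.Gamma (a + b)

/-- Density of the Beta(2μ, 2(1-μ)) distribution. -/
noncomputable def betaDensity (μ : ℝ) (u : ℝ) : ℝ :=
  if 0 < u ∧ u < 1 then
    u ^ (2 * μ - 1) * (1 - u) ^ (1 - 2 * μ) / realBeta (2 * μ) (2 * (1 - μ))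
  else 0

/-- The chi-squared distribution with `k` degrees of freedom, as a measure on ℝ. -/
noncomputable def chiSqMeasure (k : ℝ) : Measure ℝ :=
  volume.withDensity (fun v => ENNReal.ofReal (chiSqDensity k v))

/-- The Beta(2μ, 2(1-μ)) distribution, as a measure on ℝ. -/
noncomputable def betaMeasure (μ : ℝ) : Measure ℝ :=
  volume.withDensity (fun u => ENNReal.ofReal (betaDensity μ u))

/-- The polar-generalized normal distribution PGN(μ, k): the pushforward of
(chi-squared k) ⊗ (Beta(2μ, 2(1-μ))) under `(v, u) ↦ √v · cos (π u)`. -/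
noncomputable def PGN (μ k : ℝ) : Measure ℝ :=
  Measure.map (fun p : ℝ × ℝ => Real.sqrt p.1 * Real.cos (π * p.2))
    ((chiSqMeasure k).prod (betaMeasure μ))

/-- Tricomi's confluent hypergeometric function, via its integral representation
`U(a,b,z) = (1/Γ(a)) ∫_0^∞ e^(-z t) t^(a-1) (1+t)^(b-a-1) dt`. -/
noncomputable def tricomiU (a b z : ℝ) : ℝ :=
  (1 / Real.Gamma a) * ∫ t in Set.Ioi (0:ℝ), Real.exp (-z * t) * t ^ (a - 1) * (1 + t) ^ (b - a - 1)

lemma measurable_chiSqDensity (k : ℝ) : Measurable (chiSqDensity k) := by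
  unfold chiSqDensity
  exact Measurable.ite measurableSet_Ioi (by fun_prop) measurable_const

/-- The Beta(1, 1) distribution is the uniform distribution on `(0, 1)`. -/
lemma betaMeasure_half : betaMeasure (1 / 2) = volume.restrict (Ioo (0 : ℝ) 1) := by
  rw [betaMeasure, ← withDensity_indicator_one measurableSet_Ioo]
  congr 1
  ext u
  by_cases hu : 0 < u ∧ u < 1
  · have hu' : u ∈ Ioo (0 : ℝ) 1 := hu
    rw [betaDensity, if_pos hu, indicator_of_mem hu']
    norm_num [realBeta]
  · have hu' : u ∉ Ioo (0 : ℝ) 1 := hu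
    rw [betaDensity, if_neg hu, indicator_of_notMem hu']
    simp

lemma image_mul_cos_Ioo {r : ℝ} (hr : 0 < r) :
    (fun u : ℝ => r * cos (π * u)) '' Ioo 0 1 = Ioo (-r) r := by
  ext x
  constructor
  · rintro ⟨u, ⟨hu0, hu1⟩, rfl⟩
    have hpi := pi_pos
    have h0 : cos (π * u) < 1 := by
      rw [← cos_zero]
      exact cos_lt_cos_of_nonneg_of_le_pi le_rfl (by nlinarith) (by positivity)
    have h1 : -1 < cos (π * u) := by
      rw [← cos_pi]
      exact cos_lt_cos_of_nonneg_of_le_pi (by positivity) le_rfl (by nlinarith)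
    constructor <;> dsimp only <;> nlinarith
  · rintro ⟨hx0, hx1⟩
    have h0 : -1 < x / r := by rw [lt_div_iff₀ hr]; linarith
    have h1 : x / r < 1 := by rw [div_lt_iff₀ hr]; linarith
    refine ⟨arccos (x / r) / π, ⟨div_pos (arccos_pos.2 h1) pi_pos, ?_⟩, ?_⟩
    · rw [div_lt_one pi_pos]
      refine lt_of_le_of_ne (arccos_le_pi _) fun h => ?_
      exact absurd (arccos_eq_pi.1 h) (not_le.2 h0)
    · dsimp only
      rw [mul_div_cancel₀ _ pi_ne_zero, cos_arccos h0.le h1.le]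
      field_simp

/-- If `U` is uniform on `(0, 1)`, then `r * cos (π * U)` follows the arcsine law on `(-r, r)`. -/
lemma lintegral_comp_mul_cos {r : ℝ} (hr : 0 < r) (g : ℝ → ENNReal) :
    ∫⁻ u in Ioo (0 : ℝ) 1, g (r * cos (π * u)) =
      ∫⁻ x in Ioo (-r) r, ENNReal.ofReal (1 / (π * √(r ^ 2 - x ^ 2))) * g x := by
  have hderiv : ∀ u ∈ Ioo (0 : ℝ) 1, HasDerivWithinAt (fun u : ℝ => r * cos (π * u))
      (r * (-sin (π * u) * π)) (Ioo 0 1) u := fun u _ => by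
    have h : HasDerivAt (fun u : ℝ => π * u) π u := by
      simpa using (hasDerivAt_id u).const_mul π
    exact (h.cos.const_mul r).hasDerivWithinAt
  have hinj : InjOn (fun u : ℝ => r * cos (π * u)) (Ioo 0 1) := by
    intro a ha b hb hab
    have hpi := pi_pos
    have h := injOn_cos ⟨by nlinarith [ha.1], by nlinarith [ha.2]⟩
      ⟨by nlinarith [hb.1], by nlinarith [hb.2]⟩ (mul_left_cancel₀ hr.ne' hab)
    exact mul_left_cancel₀ pi_ne_zero h
  rw [← image_mul_cos_Ioo hr,
    lintegral_image_eq_lintegral_abs_deriv_mul measurableSet_Ioo hderiv hinj]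
  refine setLIntegral_congr_fun measurableSet_Ioo fun u hu => ?_
  have hs : 0 < sin (π * u) :=
    sin_pos_of_pos_of_lt_pi (mul_pos pi_pos hu.1) (by nlinarith [hu.2, pi_pos])
  have hsqrt : √(r ^ 2 - (r * cos (π * u)) ^ 2) = r * sin (π * u) := by
    rw [← sqrt_sq (mul_pos hr hs).le]
    congr 1
    linear_combination -r ^ 2 * sin_sq_add_cos_sq (π * u)
  rw [hsqrt, ← mul_assoc, ← ENNReal.ofReal_mul (abs_nonneg _)]
  have habs : |r * (-sin (π * u) * π)| = r * sin (π * u) * π := by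
    rw [show r * (-sin (π * u) * π) = -(r * sin (π * u) * π) by ring, abs_neg,
      abs_of_pos (by positivity)]
  rw [habs, show r * sin (π * u) * π * (1 / (π * (r * sin (π * u)))) = 1 by
    field_simp, ENNReal.ofReal_one, one_mul]

/-- The integrand of Tricomi's function is integrable when `a` and `z` are positive. -/
lemma integrableOn_tricomiU_integrand {a z : ℝ} (ha : 0 < a) (hz : 0 < z) (b : ℝ) :
    IntegrableOn (fun t : ℝ => exp (-z * t) * t ^ (a - 1) * (1 + t) ^ (b - a - 1)) (Ioi 0) := by
  set c := b - a - 1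
  have h1 : IntegrableOn (fun t : ℝ => t ^ (a - 1) * exp (-z * t)) (Ioi 0) := by
    simpa using integrableOn_rpow_mul_exp_neg_mul_rpow (p := 1) (s := a - 1) (by linarith)
      one_pos hz
  have h2 : IntegrableOn (fun t : ℝ => t ^ (a - 1 + |c|) * exp (-z * t)) (Ioi 0) := by
    simpa using integrableOn_rpow_mul_exp_neg_mul_rpow (p := 1) (s := a - 1 + |c|)
      (by linarith [abs_nonneg c]) one_pos hz
  refine Integrable.mono' ((h1.add h2).const_mul (2 ^ |c|))
    (by fun_prop) ?_
  filter_upwards [ae_restrict_mem measurableSet_Ioi] with t ht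
  have ht : 0 < t := ht
  have hpow : (1 + t) ^ c ≤ 2 ^ |c| * (1 + t ^ |c|) := by
    calc (1 + t) ^ c ≤ (1 + t) ^ |c| := rpow_le_rpow_of_exponent_le (by linarith) (le_abs_self c)
      _ ≤ 2 ^ |c| * (1 + t ^ |c|) := by
        have h2c : (0 : ℝ) < 2 ^ |c| := by positivity
        have htc : 0 < t ^ |c| := by positivity
        rcases le_total t 1 with h | h
        · have := rpow_le_rpow (by linarith) (show 1 + t ≤ 2 by linarith) (abs_nonneg c)
          nlinarith
        · have := rpow_le_rpow (by linarith) (show 1 + t ≤ 2 * t by linarith) (abs_nonneg c)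
          rw [mul_rpow zero_le_two ht.le] at this
          nlinarith
  rw [norm_of_nonneg (by positivity)]
  calc exp (-z * t) * t ^ (a - 1) * (1 + t) ^ c
      ≤ exp (-z * t) * t ^ (a - 1) * (2 ^ |c| * (1 + t ^ |c|)) := by gcongr
    _ = _ := by
      simp only [Pi.add_apply]
      rw [rpow_add ht]
      ring

lemma chiSqDensity_nonneg {k : ℝ} (hk : 0 < k) (v : ℝ) : 0 ≤ chiSqDensity k v := by
  have := Gamma_pos_of_pos (half_pos hk)
  unfold chiSqDensity
  split_ifs <;> positivity

/-- Mixing the arcsine laws on `(-√v, √v)` over a chi-squared variable `v` gives the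
Tricomi density. -/
lemma lintegral_chiSqDensity_div_sqrt {k x : ℝ} (hk : 0 < k) (hx : x ≠ 0) :
    ∫⁻ v in Ioi (x ^ 2), ENNReal.ofReal (chiSqDensity k v * (1 / (π * √(v - x ^ 2)))) =
      ENNReal.ofReal ((x ^ 2) ^ ((k - 1) / 2) * exp (-(x ^ 2) / 2) /
          (√π * Gamma (k / 2) * (2 : ℝ) ^ (k / 2)) *
        tricomiU (1 / 2) ((k + 1) / 2) (x ^ 2 / 2)) := by
  have hG := Gamma_pos_of_pos (half_pos hk)
  have hx2 : 0 < x ^ 2 := by positivity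
  have himage : (fun t : ℝ => x ^ 2 * (1 + t)) '' Ioi 0 = Ioi (x ^ 2) := by
    ext v
    constructor
    · rintro ⟨t, ht, rfl⟩
      have ht : 0 < t := ht
      show x ^ 2 < x ^ 2 * (1 + t)
      nlinarith
    · intro hv
      refine ⟨v / x ^ 2 - 1, ?_, ?_⟩
      · show 0 < v / x ^ 2 - 1
        rw [sub_pos, one_lt_div hx2]
        exact hv
      · dsimp only
        field_simp
        ring
  have hderiv : ∀ t ∈ Ioi (0 : ℝ), HasDerivWithinAt (fun t : ℝ => x ^ 2 * (1 + t))
      (x ^ 2) (Ioi 0) t := fun t _ => by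
    simpa using (((hasDerivAt_id t).const_add 1).const_mul (x ^ 2)).hasDerivWithinAt
  have hinj : InjOn (fun t : ℝ => x ^ 2 * (1 + t)) (Ioi 0) := fun s _ t _ hst =>
    add_left_cancel (mul_left_cancel₀ hx2.ne' hst)
  set C := (x ^ 2) ^ ((k - 1) / 2) * exp (-(x ^ 2) / 2) /
    (√π * Gamma (k / 2) * (2 : ℝ) ^ (k / 2)) with hC
  have hint := integrableOn_tricomiU_integrand (a := 1 / 2) one_half_pos (half_pos hx2)
    ((k + 1) / 2)
  rw [← himage, lintegral_image_eq_lintegral_abs_deriv_mul measurableSet_Ioi hderiv hinj,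
    tricomiU, ← mul_assoc, ← integral_const_mul,
    ofReal_integral_eq_lintegral_ofReal (hint.const_mul _)]
  · refine setLIntegral_congr_fun measurableSet_Ioi fun t ht => ?_
    have ht : 0 < t := ht
    rw [← ENNReal.ofReal_mul (abs_nonneg _), abs_of_pos hx2]
    congr 1
    have hsqrt : √(x ^ 2 * (1 + t) - x ^ 2) = (x ^ 2) ^ (1 / 2 : ℝ) * t ^ (1 / 2 : ℝ) := by
      rw [← mul_rpow hx2.le ht.le, ← sqrt_eq_rpow]
      congr 1
      ring
    have hexp : exp (-(x ^ 2 * (1 + t)) / 2) = exp (-(x ^ 2) / 2) * exp (-(x ^ 2 / 2) * t) := by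
      rw [← exp_add]
      congr 1
      ring
    have hpow : x ^ 2 * (x ^ 2) ^ (k / 2 - 1) =
        (x ^ 2) ^ ((k - 1) / 2) * (x ^ 2) ^ (1 / 2 : ℝ) := by
      rw [← rpow_add hx2, ← rpow_one_add' hx2.le (by linarith)]
      congr 1
      ring
    have htpow : t ^ (1 / 2 - 1 : ℝ) * t ^ (1 / 2 : ℝ) = 1 / t ^ (1 / 2 : ℝ) * t ^ (1 / 2 : ℝ) := by
      rw [← rpow_add ht, one_div_mul_cancel (by positivity)]
      norm_num
    have htpow := mul_right_cancel₀ (by positivity) htpow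
    have hpi : √π * √π = π := mul_self_sqrt pi_pos.le
    rw [chiSqDensity, if_pos (by positivity), hsqrt, hexp, mul_rpow hx2.le (by positivity), htpow,
      Gamma_one_half_eq, hC, show (k + 1) / 2 - 1 / 2 - 1 = k / 2 - 1 by ring]
    have : 0 < (x ^ 2) ^ (1 / 2 : ℝ) := by positivity
    have : 0 < t ^ (1 / 2 : ℝ) := by positivity
    generalize (x ^ 2) ^ (1 / 2 : ℝ) = A at *
    generalize t ^ (1 / 2 : ℝ) = B at *
    generalize (x ^ 2) ^ (k / 2 - 1) = D at *
    generalize (x ^ 2) ^ ((k - 1) / 2) = E at *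
    have hsp : 0 < √π := by positivity
    generalize √π = P at *
    rw [← hpi]
    have h2 : (0 : ℝ) < 2 ^ (k / 2) := by positivity
    generalize (2 : ℝ) ^ (k / 2) = Q at *
    generalize (1 + t) ^ (k / 2 - 1) = R at *
    generalize exp (-(x ^ 2) / 2) = S at *
    generalize exp (-(x ^ 2 / 2) * t) = T at *
    generalize Gamma (k / 2) = G at *
    calc _ = (x ^ 2 * D) * (R * (S * T) / (Q * G) * (1 / (P * P * (A * B)))) := by ring
      _ = _ := by
        rw [hpow]
        field_simp
  · filter_upwards [ae_restrict_mem measurableSet_Ioi] with t ht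
    have ht : 0 < t := ht
    have : 0 < Gamma (1 / 2) := Gamma_pos_of_pos one_half_pos
    simp only [Pi.zero_apply]
    positivity

theorem stmt3 (k : ℝ) (hk : 0 < k) :
    PGN (1/2) k = volume.withDensity (fun x : ℝ => ENNReal.ofReal (
      (x ^ 2) ^ ((k - 1) / 2) * Real.exp (-(x ^ 2) / 2) /
          (Real.sqrt π * Real.Gamma (k / 2) * (2 : ℝ) ^ (k / 2)) *
        tricomiU (1/2) ((k + 1) / 2) (x ^ 2 / 2))) := by
  have hmeas := measurable_chiSqDensity k
  have hmap : Measurable fun p : ℝ × ℝ => √p.1 * cos (π * p.2) := by fun_prop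
  ext s hs
  rw [PGN, betaMeasure_half, Measure.map_apply hmap hs, Measure.prod_apply (hmap hs), chiSqMeasure,
    lintegral_withDensity_eq_lintegral_mul _ hmeas.ennreal_ofReal
      (measurable_measure_prodMk_left (hmap hs)), withDensity_apply _ hs,
    ← lintegral_indicator hs]
  set K : ℝ → ℝ → ENNReal := fun v x => {p : ℝ × ℝ | p.2 ^ 2 < p.1}.indicator
    (fun p => ENNReal.ofReal (chiSqDensity k p.1 * (1 / (π * √(p.1 - p.2 ^ 2)))) *
      s.indicator 1 p.2) (v, x) with hK
  have hKmeas : Measurable (Function.uncurry K) := by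
    refine Measurable.indicator ?_ (measurableSet_lt (by fun_prop) (by fun_prop))
    refine Measurable.mul (Measurable.ennreal_ofReal ?_)
      ((measurable_one.indicator hs).comp measurable_snd)
    exact (hmeas.comp measurable_fst).mul (by fun_prop)
  calc _ = ∫⁻ v, ∫⁻ x, K v x := by
        refine lintegral_congr fun v => ?_
        rcases le_or_gt v 0 with hv | hv
        · have h0 : ∀ x, K v x = 0 := fun x => by
            simp only [hK]
            rw [indicator_of_notMem]
            exact not_lt.2 (hv.trans (sq_nonneg x))
          simp [h0, chiSqDensity, not_lt.2 hv]
        · have hset : ∀ x, K v x = (Ioo (-√v) √v).indicator (fun x =>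
              ENNReal.ofReal (chiSqDensity k v) *
                (ENNReal.ofReal (1 / (π * √(√v ^ 2 - x ^ 2))) * s.indicator 1 x)) x := fun x => by
            have hiff : x ∈ Ioo (-√v) √v ↔ x ^ 2 < v := by
              rw [mem_Ioo, ← abs_lt, lt_sqrt (abs_nonneg x), sq_abs]
            simp only [hK, indicator_apply, mem_ofPred_eq, hiff, sq_sqrt hv.le,
              ENNReal.ofReal_mul (chiSqDensity_nonneg hk v), mul_assoc]
          simp_rw [hset]
          rw [lintegral_indicator measurableSet_Ioo, lintegral_const_mul' _ _ ENNReal.ofReal_ne_top,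
            ← lintegral_comp_mul_cos (sqrt_pos.2 hv)]
          simp only [Pi.mul_apply]
          congr 1
          have hsec : Measurable fun u : ℝ => √v * cos (π * u) := by fun_prop
          exact (lintegral_indicator_one (hsec hs)).symm
    _ = ∫⁻ x, ∫⁻ v, K v x := lintegral_lintegral_swap hKmeas.aemeasurable
    _ = _ := by
        refine lintegral_congr_ae ?_
        filter_upwards [compl_mem_ae_iff.2 (measure_singleton (0 : ℝ))] with x hx
        have hx : x ≠ 0 := hx
        by_cases hxs : x ∈ s
        · rw [indicator_of_mem hxs, ← lintegral_chiSqDensity_div_sqrt hk hx,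
            ← lintegral_indicator measurableSet_Ioi]
          refine lintegral_congr fun v => ?_
          simp [hK, indicator_apply, hxs]
        · rw [indicator_of_notMem hxs]
          simp [hK, indicator_apply, hxs]
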